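/- Let γ = (1 2 ... p) be the full cycle in S_p. The set of permutations σ ∈ S_p satisfying |σ| + |σ⁻¹γ| = p − 1 is in bijection with the set NC(p) of non-crossing partitions of {1,...,p}, the bijection sending σ to the partition [σ] given by the orbits of σ. In particular, the number of such permutations equals the Catalan number C_p = (1/(p+1)) * binomial(2p, p). -/

import Mathlib

open Equiv Finset MeasureTheory

/-- A finpartition of `Fin n` is non-crossing if there are no `a < b < c < d` with
`a, c` in one block and `b, d` in another, distinct block. -/
def IsNonCrossing {n : ℕ} (P : Finpartition (Finset.univ : Finset (Fin n))) : Prop :=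
  ¬ ∃ (a b c d : Fin n) (X Y : Finset (Fin n)), X ∈ P.parts ∧ Y ∈ P.parts ∧ X ≠ Y ∧
      a < b ∧ b < c ∧ c < d ∧ a ∈ X ∧ c ∈ X ∧ b ∈ Y ∧ d ∈ Y

/-- The minimal number of transpositions whose product is `σ`. -/
noncomputable def permLength {n : ℕ} (σ : Equiv.Perm (Fin n)) : ℕ :=
  sInf {k | ∃ l : List (Equiv.Perm (Fin n)), (∀ τ ∈ l, τ.IsSwap) ∧ l.prod = σ ∧ l.length = k}

/-- The number of cycles of `σ`, counting fixed points as cycles (= number of orbits). -/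
def cycleCount {n : ℕ} (σ : Equiv.Perm (Fin n)) : ℕ :=
  Multiset.card σ.cycleType + (n - σ.support.card)

/-- The setoid on `Fin n` whose classes are the orbits (cycles) of `σ`. -/
def sameCycleSetoid {n : ℕ} (σ : Equiv.Perm (Fin n)) : Setoid (Fin n) :=
  ⟨σ.SameCycle, ⟨Equiv.Perm.SameCycle.refl σ, fun h => h.symm, fun h h' => h.trans h'⟩⟩

instance {n : ℕ} (σ : Equiv.Perm (Fin n)) : DecidableRel ⇑(sameCycleSetoid σ) :=
  fun a b => (inferInstance : Decidable (σ.SameCycle a b))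

/-- The partition of `Fin n` into orbits of `σ`. -/
def orbitPartition {n : ℕ} (σ : Equiv.Perm (Fin n)) :
    Finpartition (Finset.univ : Finset (Fin n)) :=
  Finpartition.ofSetoid (sameCycleSetoid σ)

/-!
Multiplying by a transposition merges two orbits or splits one, so `|σ| = p - #σ`, and `σ` lies on a
geodesic from `1` to `γ` exactly when it arises from `γ` by successively splitting cycles. Call `σ`
non-crossing if it preserves each open arc from `x` to `σ x` of the cyclic order. Splitting a cycle
keeps this property, which `γ` has vacuously; and a non-crossing `σ ≠ γ`, say with `σ x ≠ γ x`,
stays non-crossing when the cycles of `x` and `γ x` are merged. So the geodesic permutations are the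
non-crossing ones.

A non-crossing permutation rotates each of its orbits in cyclic order, and its orbits do not cross;
conversely, rotating the blocks of a non-crossing partition gives a non-crossing permutation.

To count the non-crossing partitions, encode each by the map sending a point to the maximum of its
block. Cutting such a map at the image of the least point gives the recursion of the Catalan
numbers.
-/

section OrbitCount

variable {α : Type*} {σ : Perm α} {a b x y : α}

theorem sameCycle_induction [Finite α] {P : α → Prop} (hxy : σ.SameCycle x y)
    (hstep : ∀ z, P z → P (σ z)) (hx : P x) : P y := by
  obtain ⟨k, rfl⟩ := hxy.exists_nat_pow_eq
  induction k with
  | zero => exact hx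
  | succ k ih =>
    rw [pow_succ', Perm.mul_apply]
    exact hstep _ (ih ⟨k, by simp⟩)

theorem sameCycle_swap_apply [DecidableEq α] (hab : σ.SameCycle a b) (x : α) :
    σ.SameCycle x (swap a b x) := by
  rw [swap_apply_def]
  split_ifs with ha hb
  · exact ha ▸ hab
  · exact hb ▸ hab.symm
  · exact .refl _ x

/-- The number of orbits of `σ`, fixed points included: the `#σ` of `|σ| = p - #σ`. -/
noncomputable def orbitCount (σ : Perm α) : ℕ :=
  Nat.card (Quotient (Perm.SameCycle.setoid σ))

theorem orbitCount_one : orbitCount (1 : Perm α) = Nat.card α := by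
  refine (Nat.card_eq_of_bijective (Quotient.mk _) ⟨fun x y h ↦ ?_, Quotient.mk_surjective⟩).symm
  exact Perm.sameCycle_one.1 (Quotient.exact h)

/-- The `σ`-orbit of a point, after the orbit of `b` has been identified with that of `a`. -/
noncomputable def mergedOrbit (σ : Perm α) (a b x : α) : Quotient (Perm.SameCycle.setoid σ) :=
  open Classical in if σ.SameCycle x b then Quotient.mk _ a else Quotient.mk _ x

theorem range_mergedOrbit (hab : ¬ σ.SameCycle a b) :
    Set.range (mergedOrbit σ a b) = {Quotient.mk _ b}ᶜ := by
  ext q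
  induction q using Quotient.inductionOn with | _ x
  simp only [Set.mem_range, Set.mem_compl_iff, Set.mem_singleton_iff]
  constructor
  · rintro ⟨z, hz⟩ hx
    unfold mergedOrbit at hz
    split_ifs at hz with h
    · exact hab (Quotient.exact (hz.trans hx))
    · exact h (Quotient.exact (hz.trans hx))
  · intro hx
    exact ⟨x, if_neg fun h ↦ hx (Quotient.sound h)⟩

variable [Finite α]

theorem orbitCount_le_orbitCount {σ τ : Perm α} (h : ∀ x, σ.SameCycle x (τ x)) :
    orbitCount σ ≤ orbitCount τ :=
  Nat.card_le_card_of_surjective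
    (Quotient.map id fun _ _ hxy ↦
      sameCycle_induction hxy (fun z hz ↦ hz.trans (h z)) (Perm.SameCycle.refl σ _))
    (Quotient.mk_surjective.forall.2 fun x ↦ ⟨Quotient.mk _ x, rfl⟩)

variable [DecidableEq α]

theorem sameCycle_mul_swap_of_not_sameCycle (hab : ¬ σ.SameCycle a b) :
    (σ * swap a b).SameCycle a b := by
  by_contra hn
  -- From `a`, the product enters the `σ`-orbit of `b` and follows it all the way round to `b`.
  have follow : σ.SameCycle b (σ⁻¹ b) ∧ (σ * swap a b).SameCycle a (σ (σ⁻¹ b)) := by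
    refine sameCycle_induction (σ := σ) (x := b)
      (P := fun y ↦ σ.SameCycle b y ∧ (σ * swap a b).SameCycle a (σ y))
      (by simp [Perm.SameCycle.refl]) (fun y ⟨hy, hay⟩ ↦ ?_) ⟨.refl _ _, 1, by simp⟩
    have hya : σ y ≠ a := fun h ↦ hab (h ▸ hy.apply_right).symm
    have hyb : σ y ≠ b := fun h ↦ hn (h ▸ hay)
    refine ⟨Perm.sameCycle_apply_right.2 hy, ?_⟩
    simpa [swap_apply_of_ne_of_ne hya hyb] using Perm.sameCycle_apply_right.2 hay
  exact hn (by simpa using follow.2)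

theorem sameCycle_mul_swap_of_sameCycle (hab : ¬ σ.SameCycle a b) (hxy : σ.SameCycle x y) :
    (σ * swap a b).SameCycle x y := by
  refine sameCycle_induction hxy (fun z hz ↦ hz.trans ?_) (.refl _ x)
  simpa using (sameCycle_swap_apply (sameCycle_mul_swap_of_not_sameCycle hab) z).apply_right

theorem mergedOrbit_eq_iff (hab : ¬ σ.SameCycle a b) :
    mergedOrbit σ a b x = mergedOrbit σ a b y ↔ (σ * swap a b).SameCycle x y := by
  have hmerge := sameCycle_mul_swap_of_not_sameCycle hab
  have hmk {u v : α} : (Quotient.mk (Perm.SameCycle.setoid σ) u = Quotient.mk _ v) ↔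
      σ.SameCycle u v := Quotient.eq
  constructor
  · unfold mergedOrbit
    have := @sameCycle_mul_swap_of_sameCycle (hab := hab)
    split_ifs with hx hy hy <;> rw [hmk] <;> intro h
    all_goals grind [Perm.SameCycle.trans, Perm.SameCycle.symm]
  · intro h
    refine sameCycle_induction (P := (mergedOrbit σ a b x = mergedOrbit σ a b ·)) h
      (fun z hz ↦ hz.trans ?_) rfl
    simp only [mergedOrbit, Perm.mul_apply, Perm.sameCycle_apply_left]
    grind [Perm.SameCycle.refl, Perm.sameCycle_apply_left, Perm.sameCycle_apply_right]

theorem orbitCount_mul_swap_of_not_sameCycle (hab : ¬ σ.SameCycle a b) :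
    orbitCount (σ * swap a b) + 1 = orbitCount σ := by
  have hker : Perm.SameCycle.setoid (σ * swap a b) = Setoid.ker (mergedOrbit σ a b) :=
    Setoid.ext fun x y ↦ (mergedOrbit_eq_iff hab).symm
  rw [orbitCount, hker, Nat.card_congr (Setoid.quotientKerEquivRange _), range_mergedOrbit hab,
    Nat.card_coe_set_eq, add_comm, ← Set.ncard_singleton (Quotient.mk (Perm.SameCycle.setoid σ) b),
    Set.ncard_add_ncard_compl, orbitCount]

theorem orbitCount_le_orbitCount_mul_swap_add_one :
    orbitCount σ ≤ orbitCount (σ * swap a b) + 1 := by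
  by_cases hab : σ.SameCycle a b
  · refine (orbitCount_le_orbitCount fun x ↦ ?_).trans (Nat.le_succ _)
    exact (sameCycle_swap_apply hab x).apply_right
  · exact (orbitCount_mul_swap_of_not_sameCycle hab).ge

theorem card_le_length_add_orbitCount_prod {l : List (Perm α)} (hl : ∀ τ ∈ l, τ.IsSwap) :
    Nat.card α ≤ l.length + orbitCount l.prod := by
  induction l using List.reverseRecOn with
  | nil => simp [orbitCount_one]
  | append_singleton l τ ih =>
    obtain ⟨a, b, -, rfl⟩ := hl τ (by simp)
    have hle := ih fun τ hτ ↦ hl τ (by simp [hτ])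
    have hstep := orbitCount_le_orbitCount_mul_swap_add_one (σ := l.prod) (a := a) (b := b)
    rw [List.length_append, List.length_singleton, List.prod_append, List.prod_singleton]
    omega

end OrbitCount

section PermLength

variable {n : ℕ} {σ : Perm (Fin n)} {a b : Fin n}

theorem exists_swaps_prod_eq (σ : Perm (Fin n)) :
    ∃ l : List (Perm (Fin n)), (∀ τ ∈ l, τ.IsSwap) ∧ l.prod = σ ∧ l.length = permLength σ := by
  obtain ⟨l, hprod, hswap⟩ := (Perm.truncSwapFactors σ).out
  exact Nat.sInf_mem (s := {k | ∃ l : List (Perm (Fin n)), (∀ τ ∈ l, τ.IsSwap) ∧ l.prod = σ ∧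
    l.length = k}) ⟨l.length, l, hswap, hprod, rfl⟩

theorem permLength_prod_le {l : List (Perm (Fin n))} (hl : ∀ τ ∈ l, τ.IsSwap) :
    permLength l.prod ≤ l.length :=
  Nat.sInf_le ⟨l, hl, rfl, rfl⟩

theorem permLength_one : permLength (1 : Perm (Fin n)) = 0 :=
  Nat.le_zero.1 (permLength_prod_le (l := []) (by simp))

theorem permLength_swap_le : permLength (swap a b) ≤ 1 := by
  rcases eq_or_ne a b with rfl | hab
  · simp [← Perm.one_def, permLength_one]
  · simpa using permLength_prod_le (l := [swap a b]) (by simpa using ⟨a, b, hab, rfl⟩)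

theorem permLength_mul_le (σ τ : Perm (Fin n)) :
    permLength (σ * τ) ≤ permLength σ + permLength τ := by
  obtain ⟨l, hl, hσ, hlen⟩ := exists_swaps_prod_eq σ
  obtain ⟨l', hl', hτ, hlen'⟩ := exists_swaps_prod_eq τ
  rw [← hlen, ← hlen', ← List.length_append, ← hσ, ← hτ, ← List.prod_append]
  exact permLength_prod_le fun υ hυ ↦ (List.mem_append.1 hυ).elim (hl υ) (hl' υ)

theorem permLength_add_orbitCount (σ : Perm (Fin n)) : permLength σ + orbitCount σ = n := by
  refine le_antisymm ?_ ?_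
  · induction hk : n - orbitCount σ using Nat.strong_induction_on generalizing σ with | _ k ih
    by_cases h1 : σ = 1
    · simp [h1, permLength_one, orbitCount_one]
    obtain ⟨x, hx⟩ : ∃ x, σ x ≠ x := by simpa [Perm.ext_iff] using h1
    set τ := σ * swap x (σ⁻¹ x) with hτ
    have hσ : τ * swap x (σ⁻¹ x) = σ := mul_swap_mul_self _ _ _
    have hfix : τ x = x := by simp [hτ]
    have hsplit : ¬ τ.SameCycle x (σ⁻¹ x) := fun h ↦
      hx (Perm.eq_inv_iff_eq.1 (h.eq_of_left hfix))
    have hcount := orbitCount_mul_swap_of_not_sameCycle hsplit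
    have hle : orbitCount τ ≤ n := by
      simpa [orbitCount_one] using
        orbitCount_le_orbitCount (σ := τ) (τ := 1) fun x ↦ .refl _ x
    have hlen := permLength_mul_le τ (swap x (σ⁻¹ x))
    have hone := permLength_swap_le (a := x) (b := σ⁻¹ x)
    rw [hσ] at hcount hlen
    have := ih (n - orbitCount τ) (by omega) τ rfl
    omega
  · obtain ⟨l, hl, rfl, hlen⟩ := exists_swaps_prod_eq σ
    simpa [hlen] using card_le_length_add_orbitCount_prod hl

theorem permLength_mul_swap_of_not_sameCycle (hab : ¬ σ.SameCycle a b) :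
    permLength (σ * swap a b) = permLength σ + 1 := by
  have h := orbitCount_mul_swap_of_not_sameCycle hab
  have hσ := permLength_add_orbitCount σ
  have hσab := permLength_add_orbitCount (σ * swap a b)
  omega

theorem sameCycle_finRotate (x y : Fin n) : (finRotate n).SameCycle x y := by
  match n with
  | 0 => exact x.elim0
  | 1 => exact Subsingleton.elim x y ▸ .refl _ x
  | n + 2 =>
    exact isCycle_finRotate.sameCycle (by simp) (by simp)

theorem permLength_finRotate : permLength (finRotate n) = n - 1 := by
  have hsum := permLength_add_orbitCount (finRotate n)
  cases n with
  | zero => exact (Nat.add_eq_zero_iff.1 hsum).1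
  | succ n =>
    have : Subsingleton (Quotient (Perm.SameCycle.setoid (finRotate (n + 1)))) :=
      ⟨Quotient.ind₂ fun x y ↦ Quotient.sound (sameCycle_finRotate x y)⟩
    have hone : orbitCount (finRotate (n + 1)) = 1 :=
      Nat.card_eq_one_iff_unique.2 ⟨this, ⟨Quotient.mk _ 0⟩⟩
    omega

end PermLength

section NoncrossingPerm

variable {α : Type*} [LinearOrder α] {σ τ : Perm α} {a b c d x y z : α}

/-- The points strictly between `x` and `z` in the cyclic order. Unlike `Set.cIoo`, the arc from
`x` to itself goes once around: `openArc x x = {x}ᶜ`. -/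
def openArc (x z : α) : Set α :=
  {y | if x < z then x < y ∧ y < z else x < y ∨ y < z}

theorem mem_openArc : y ∈ openArc x z ↔ if x < z then x < y ∧ y < z else x < y ∨ y < z :=
  Iff.rfl

theorem left_notMem_openArc : x ∉ openArc x z := by
  rw [mem_openArc]
  grind

/-- A permutation is non-crossing if it preserves every arc from a point to its image. This says at
once that its orbits do not cross and that it rotates each of them in cyclic order. -/
def IsNoncrossingPerm (σ : Perm α) : Prop :=
  ∀ x, Set.MapsTo σ (openArc x (σ x)) (openArc x (σ x))

/-- A relation is non-crossing if any two of its chords that cross are related. -/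
def NoncrossingRel (r : α → α → Prop) : Prop :=
  ∀ ⦃a b c d⦄, a < b → b < c → c < d → r a c → r b d → r a b

theorem mem_openArc_of_openArc_eq_empty (hempty : openArc x y = ∅) (hyz : y ≠ z) :
    y ∈ openArc x z := by
  have hgap (w) : w ∉ openArc x y := by simp [hempty]
  simp only [mem_openArc] at *
  grind

theorem mem_openArc_iff_of_openArc_eq_empty (hempty : openArc a b = ∅) (hax : a ≠ x)
    (hbz : b ≠ z) : a ∈ openArc x z ↔ b ∈ openArc x z := by
  have hgap (y) : y ∉ openArc a b := by simp [hempty]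
  simp only [mem_openArc] at *
  grind

variable [Finite α]

namespace IsNoncrossingPerm

theorem mem_openArc_iff (hσ : IsNoncrossingPerm σ) (hyz : σ.SameCycle y z) :
    y ∈ openArc x (σ x) ↔ z ∈ openArc x (σ x) :=
  ⟨sameCycle_induction hyz fun _ h ↦ hσ x h, sameCycle_induction hyz.symm fun _ h ↦ hσ x h⟩

theorem notMem_openArc (hσ : IsNoncrossingPerm σ) (hxy : σ.SameCycle x y) :
    y ∉ openArc x (σ x) := by
  rw [← hσ.mem_openArc_iff hxy]
  exact left_notMem_openArc

theorem ext_sameCycle (hσ : IsNoncrossingPerm σ) (hτ : IsNoncrossingPerm τ)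
    (h : ∀ x y, σ.SameCycle x y ↔ τ.SameCycle x y) : σ = τ := by
  ext x
  have hσx := hσ.notMem_openArc ((h x (τ x)).2 (Perm.SameCycle.refl τ x).apply_right)
  have hτx := hτ.notMem_openArc ((h x (σ x)).1 (Perm.SameCycle.refl σ x).apply_right)
  rw [mem_openArc] at hσx hτx
  grind

theorem noncrossingRel (hσ : IsNoncrossingPerm σ) : NoncrossingRel σ.SameCycle := by
  intro a b c d hab hbc hcd hac hbd
  by_contra hn
  obtain ⟨x, hax, hx, hσx⟩ : ∃ x, σ.SameCycle a x ∧ x ∈ openArc d b ∧ σ x ∉ openArc d b := by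
    by_contra! hstay
    have hc := sameCycle_induction (P := fun z ↦ σ.SameCycle a z ∧ z ∈ openArc d b) hac
      (fun z hz ↦ ⟨hz.1.apply_right, hstay z hz.1 hz.2⟩)
      ⟨.refl _ a, by rw [mem_openArc]; grind⟩
    have := hc.2
    rw [mem_openArc] at this
    grind
  have hb : σ x ≠ b := fun h ↦ hn (h ▸ hax.apply_right)
  have := hσ.mem_openArc_iff (x := x) hbd
  simp only [mem_openArc] at *
  grind

theorem apply_mem_openArc_or_eq (hσ : IsNoncrossingPerm σ) (hab : σ.SameCycle a b)
    (hy : y ∈ openArc a b) : σ y ∈ openArc a b ∨ σ y = b := by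
  have := hσ.mem_openArc_iff (x := y) hab
  simp only [mem_openArc] at *
  grind

theorem mapsTo_mul_swap_openArc (hσ : IsNoncrossingPerm σ) (hab : σ.SameCycle a b) :
    Set.MapsTo (σ * swap a b) (openArc a (σ b)) (openArc a (σ b)) := by
  intro y hy
  rw [Perm.mul_apply, swap_apply_def]
  split_ifs with hya hyb
  · rw [mem_openArc] at hy
    grind
  · have := hσ.notMem_openArc hab
    have : σ a = a → a = b := fun h ↦ hab.eq_of_left h
    simp only [mem_openArc] at *
    grind [σ.injective.eq_iff]
  · exact (hσ.apply_mem_openArc_or_eq hab.apply_right hy).resolve_right (σ.injective.ne hyb)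

theorem mul_swap_of_sameCycle (hσ : IsNoncrossingPerm σ) (hab : σ.SameCycle a b) :
    IsNoncrossingPerm (σ * swap a b) := by
  intro x
  rcases eq_or_ne x a with rfl | hxa
  · simpa using hσ.mapsTo_mul_swap_openArc hab
  rcases eq_or_ne x b with rfl | hxb
  · simpa [swap_comm] using hσ.mapsTo_mul_swap_openArc hab.symm
  rw [Perm.mul_apply, swap_apply_of_ne_of_ne hxa hxb]
  have harc := hσ.mem_openArc_iff (x := x) hab
  exact (hσ x).comp fun y hy ↦ by rw [swap_apply_def]; grind

theorem mul_swap_of_openArc_eq_empty (hσ : IsNoncrossingPerm σ) (hab : ¬ σ.SameCycle a b)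
    (hempty : openArc a (σ b) = ∅) : IsNoncrossingPerm (σ * swap a b) := by
  have hne : a ≠ b := by rintro rfl; exact hab (.refl _ a)
  have harc {x} (hxa : x ≠ a) (hxb : x ≠ b) : a ∈ openArc x (σ x) ↔ b ∈ openArc x (σ x) := by
    rw [hσ.mem_openArc_iff (Perm.SameCycle.refl σ b).apply_right]
    exact mem_openArc_iff_of_openArc_eq_empty hempty hxa.symm (σ.injective.ne hxb.symm)
  intro x
  rcases eq_or_ne x a with rfl | hxa
  · simp [hempty]
  rcases eq_or_ne x b with rfl | hxb
  · intro y hy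
    rw [Perm.mul_apply, swap_apply_right] at hy ⊢
    rcases eq_or_ne y a with rfl | hya
    · rw [Perm.mul_apply, swap_apply_left]
      exact (mem_openArc_iff_of_openArc_eq_empty hempty hne (σ.injective.ne hne.symm)).1 hy
    have hyx : y ≠ x := ne_of_mem_of_not_mem hy left_notMem_openArc
    rw [Perm.mul_apply, swap_apply_of_ne_of_ne hya hyx]
    have hσa := hσ.mem_openArc_iff (x := y) (Perm.SameCycle.refl σ a).apply_right
    have hσy := σ.injective.ne hya
    have := harc hya hyx
    simp only [mem_openArc] at *
    grind
  · rw [Perm.mul_apply, swap_apply_of_ne_of_ne hxa hxb]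
    have := harc hxa hxb
    exact (hσ x).comp fun y hy ↦ by rw [swap_apply_def]; grind

end IsNoncrossingPerm

end NoncrossingPerm

section Geodesic

variable {n : ℕ} {σ : Perm (Fin n)}

theorem openArc_finRotate (x : Fin n) : openArc x (finRotate n x) = ∅ := by
  cases n with
  | zero => exact x.elim0
  | succ n =>
    refine Set.eq_empty_of_forall_notMem fun y ↦ ?_
    have hx := coe_finRotate x
    rw [mem_openArc]
    grind

theorem isNoncrossingPerm_finRotate : IsNoncrossingPerm (finRotate n) := fun x ↦ by
  rw [openArc_finRotate]
  exact Set.mapsTo_empty _ _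

theorem permLength_add_permLength_le (σ : Perm (Fin n)) :
    n - 1 ≤ permLength σ + permLength (σ⁻¹ * finRotate n) := by
  simpa [permLength_finRotate] using permLength_mul_le σ (σ⁻¹ * finRotate n)

theorem IsNoncrossingPerm.of_geodesic
    (hσ : permLength σ + permLength (σ⁻¹ * finRotate n) = n - 1) : IsNoncrossingPerm σ := by
  obtain ⟨l, hl, hprod, hlen⟩ := exists_swaps_prod_eq (σ⁻¹ * finRotate n)
  induction l generalizing σ with
  | nil =>
    obtain rfl : σ = finRotate n := inv_mul_eq_one.1 hprod.symm
    exact isNoncrossingPerm_finRotate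
  | cons τ l ih =>
    obtain ⟨a, b, -, rfl⟩ := hl τ (by simp)
    have hl' : ∀ τ ∈ l, τ.IsSwap := fun τ hτ ↦ hl τ (by simp [hτ])
    have hrest : l.prod = (σ * swap a b)⁻¹ * finRotate n := by
      rw [mul_inv_rev, swap_inv, mul_assoc, ← hprod, List.prod_cons, swap_mul_self_mul]
    have hback : σ * swap a b * swap a b = σ := mul_swap_mul_self a b σ
    have hle := permLength_prod_le hl'
    have hup := permLength_mul_le σ (swap a b)
    have hone := permLength_swap_le (a := a) (b := b)
    have hge := permLength_add_permLength_le (σ * swap a b)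
    rw [List.length_cons] at hlen
    rw [hrest] at hle
    have hsame : (σ * swap a b).SameCycle a b := by
      by_contra hn
      have := permLength_mul_swap_of_not_sameCycle hn
      rw [hback] at this
      omega
    have := (ih (σ := σ * swap a b) (by omega) hl' hrest (by omega)).mul_swap_of_sameCycle hsame
    rwa [hback] at this

theorem IsNoncrossingPerm.geodesic (hσ : IsNoncrossingPerm σ) :
    permLength σ + permLength (σ⁻¹ * finRotate n) = n - 1 := by
  refine (permLength_add_permLength_le σ).antisymm' ?_
  induction hk : n - permLength σ using Nat.strong_induction_on generalizing σ with | _ k ih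
  by_cases hrot : σ = finRotate n
  · simp [hrot, permLength_finRotate, permLength_one]
  obtain ⟨x, hx⟩ : ∃ x, σ x ≠ finRotate n x := by simpa [Perm.ext_iff] using hrot
  have hσb : σ (σ⁻¹ (finRotate n x)) = finRotate n x := by simp
  set b := σ⁻¹ (finRotate n x)
  have hxb : ¬ σ.SameCycle x b := fun h ↦ hσ.notMem_openArc h.apply_right <|
    hσb ▸ mem_openArc_of_openArc_eq_empty (openArc_finRotate x) hx.symm
  have hlen := permLength_mul_swap_of_not_sameCycle hxb
  have hle := permLength_add_orbitCount (σ * swap x b)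
  have hmerge := ih _ (by omega) (hσ.mul_swap_of_openArc_eq_empty hxb
    (by rw [hσb, openArc_finRotate])) rfl
  have hswap : σ⁻¹ * finRotate n = swap x b * ((σ * swap x b)⁻¹ * finRotate n) := by
    rw [mul_inv_rev, swap_inv, mul_assoc, swap_mul_self_mul]
  have := permLength_mul_le (swap x b) ((σ * swap x b)⁻¹ * finRotate n)
  have := permLength_swap_le (a := x) (b := b)
  rw [hswap]
  omega

theorem geodesic_iff_isNoncrossingPerm :
    permLength σ + permLength (σ⁻¹ * finRotate n) = n - 1 ↔ IsNoncrossingPerm σ :=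
  ⟨.of_geodesic, IsNoncrossingPerm.geodesic⟩

end Geodesic

section FiberRotation

theorem NoncrossingRel.eq_of_mem_openArc {α β : Type*} [LinearOrder α] {f : α → β} {x y z w : α}
    (hf : NoncrossingRel fun x y ↦ f x = f y) (hxz : f x = f z) (hyw : f y = f w)
    (hy : y ∈ openArc x z) (hw : w ∉ openArc x z) : f x = f y := by
  by_contra hxy
  have hwx : w < x ∨ x < w := Ne.lt_or_gt (by grind)
  have hwz : w < z ∨ z < w := Ne.lt_or_gt (by grind)
  have hxyzw := @hf x y z w
  have hyzwx := @hf y z w x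
  have hzwxy := @hf z w x y
  have hwxyz := @hf w x y z
  simp only [mem_openArc] at *
  grind

variable {α β : Type*} [Fintype α] [LinearOrder α] [DecidableEq β] {x y : α}

/-- The permutation of `α` rotating each fiber of `f` cyclically, in increasing order. -/
def fiberRotation (f : α → β) : Perm α :=
  (sigmaFiberEquiv f).permCongr <| Perm.sigmaCongrRight fun q ↦
    (monoEquivOfFin {x // f x = q} rfl).toEquiv.permCongr (finRotate _)

theorem apply_fiberRotation (f : α → β) (x : α) : f (fiberRotation f x) = f x := by
  rw [fiberRotation, permCongr_apply]
  exact Subtype.prop (p := (f · = f x)) _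

theorem exists_fiberRotation_eq (f : α → β) (x : α) :
    ∃ n, ∃ e : Fin n ≃o {y // f y = f x}, ∀ i, fiberRotation f (e i) = e (finRotate n i) := by
  refine ⟨_, monoEquivOfFin _ rfl, fun i ↦ ?_⟩
  have hi : (sigmaFiberEquiv f).symm (monoEquivOfFin {y // f y = f x} rfl i) =
      ⟨f x, monoEquivOfFin {y // f y = f x} rfl i⟩ := (symm_apply_eq _).2 rfl
  rw [fiberRotation, permCongr_apply, hi]
  simp

theorem sameCycle_fiberRotation {f : α → β} : (fiberRotation f).SameCycle x y ↔ f x = f y := by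
  constructor
  · intro h
    exact sameCycle_induction (P := fun z ↦ f x = f z) h
      (fun z hz ↦ hz.trans (apply_fiberRotation f z).symm) rfl
  · intro h
    obtain ⟨n, e, he⟩ := exists_fiberRotation_eq f x
    obtain ⟨i, hi⟩ := e.surjective ⟨x, rfl⟩
    obtain ⟨j, hj⟩ := e.surjective ⟨y, h.symm⟩
    have hxj := sameCycle_induction (P := fun k ↦ (fiberRotation f).SameCycle x (e k))
      (sameCycle_finRotate i j) (fun k hk ↦ he k ▸ hk.apply_right) (hi ▸ .refl _ x)
    simpa [hj] using hxj

theorem notMem_openArc_fiberRotation {f : α → β} (h : f x = f y) :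
    y ∉ openArc x (fiberRotation f x) := by
  obtain ⟨n, e, he⟩ := exists_fiberRotation_eq f x
  obtain ⟨i, hi⟩ := e.surjective ⟨x, rfl⟩
  obtain ⟨j, hj⟩ := e.surjective ⟨y, h.symm⟩
  have hx : x = e i := congrArg Subtype.val hi.symm
  have hy : y = e j := congrArg Subtype.val hj.symm
  have hij : j ∉ openArc i (finRotate n i) := by
    rw [openArc_finRotate]
    exact Set.notMem_empty j
  rw [hx, he, hy]
  simpa [mem_openArc] using hij

theorem isNoncrossingPerm_fiberRotation {f : α → β} (hf : NoncrossingRel fun x y ↦ f x = f y) :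
    IsNoncrossingPerm (fiberRotation f) := by
  intro x y hy
  by_contra hσy
  have hxy :=
    hf.eq_of_mem_openArc (apply_fiberRotation f x).symm (apply_fiberRotation f y).symm hy hσy
  exact notMem_openArc_fiberRotation hxy hy

end FiberRotation

section Partition

theorem part_ofSetoid_eq_part_iff {α : Type*} [Fintype α] [DecidableEq α] {s : Setoid α}
    [DecidableRel s] {x y : α} :
    (Finpartition.ofSetoid s).part x = (Finpartition.ofSetoid s).part y ↔ s x y := by
  rw [← Finpartition.mem_part_iff_part_eq_part _ (mem_univ x) (mem_univ y),
    Finpartition.mem_part_ofSetoid_iff_rel]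
  exact s.comm'

/-- The partition of a finite type into the fibers of `f`. -/
def fiberPartition {α β : Type*} [Fintype α] [DecidableEq α] [DecidableEq β] (f : α → β) :
    Finpartition (univ : Finset α) :=
  haveI : DecidableRel (Setoid.ker f) := fun x y ↦ decEq (f x) (f y)
  Finpartition.ofSetoid (Setoid.ker f)

theorem part_fiberPartition_eq_part_iff {α β : Type*} [Fintype α] [DecidableEq α] [DecidableEq β]
    {f : α → β} {x y : α} :
    (fiberPartition f).part x = (fiberPartition f).part y ↔ f x = f y :=
  letI : DecidableRel (Setoid.ker f) := fun x y ↦ decEq (f x) (f y)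
  part_ofSetoid_eq_part_iff

theorem parts_eq_image_part {α : Type*} [DecidableEq α] {s : Finset α} (P : Finpartition s) :
    P.parts = s.image P.part := by
  ext t
  rw [mem_image]
  exact ⟨fun ht ↦ P.part_surjOn ht, by rintro ⟨x, hx, rfl⟩; exact P.part_mem.2 hx⟩

theorem finpartition_ext_part {α : Type*} [Fintype α] [DecidableEq α]
    {P Q : Finpartition (univ : Finset α)}
    (h : ∀ x y, P.part x = P.part y ↔ Q.part x = Q.part y) : P = Q := by
  have hpart : P.part = Q.part := by
    ext x y
    rw [P.mem_part_iff_part_eq_part (mem_univ y) (mem_univ x), h,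
      Q.mem_part_iff_part_eq_part (mem_univ y) (mem_univ x)]
  ext1
  rw [parts_eq_image_part, parts_eq_image_part, hpart]

variable {n : ℕ} {σ : Perm (Fin n)} {P : Finpartition (univ : Finset (Fin n))}

theorem isNonCrossing_iff_noncrossingRel :
    IsNonCrossing P ↔ NoncrossingRel fun x y ↦ P.part x = P.part y := by
  constructor
  · intro hP a b c d hab hbc hcd hac hbd
    by_contra hne
    exact hP ⟨a, b, c, d, _, _, P.part_mem.2 (mem_univ a), P.part_mem.2 (mem_univ b), hne, hab, hbc,
      hcd, P.mem_part (mem_univ a), hac ▸ P.mem_part (mem_univ c), P.mem_part (mem_univ b),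
      hbd ▸ P.mem_part (mem_univ d)⟩
  · rintro hP ⟨a, b, c, d, X, Y, hX, hY, hne, hab, hbc, hcd, ha, hc, hb, hd⟩
    refine hne ?_
    rw [← P.part_eq_of_mem hX ha, ← P.part_eq_of_mem hY hb]
    exact hP hab hbc hcd ((P.part_eq_of_mem hX ha).trans (P.part_eq_of_mem hX hc).symm)
      ((P.part_eq_of_mem hY hb).trans (P.part_eq_of_mem hY hd).symm)

theorem part_orbitPartition_eq_part_iff {x y : Fin n} :
    (orbitPartition σ).part x = (orbitPartition σ).part y ↔ σ.SameCycle x y :=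
  part_ofSetoid_eq_part_iff

theorem isNonCrossing_orbitPartition (hσ : IsNoncrossingPerm σ) :
    IsNonCrossing (orbitPartition σ) := by
  rw [isNonCrossing_iff_noncrossingRel]
  simpa only [part_orbitPartition_eq_part_iff] using hσ.noncrossingRel

/-- Non-crossing permutations correspond to non-crossing partitions, by taking orbits. -/
noncomputable def noncrossingPermEquiv :
    {σ : Perm (Fin n) // IsNoncrossingPerm σ} ≃
      {P : Finpartition (univ : Finset (Fin n)) // IsNonCrossing P} :=
  ofBijective (fun σ ↦ ⟨orbitPartition σ, isNonCrossing_orbitPartition σ.2⟩) <| by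
    constructor
    · intro σ τ h
      refine Subtype.ext (σ.2.ext_sameCycle τ.2 fun x y ↦ ?_)
      have h' : orbitPartition σ.1 = orbitPartition τ.1 := congrArg Subtype.val h
      rw [← part_orbitPartition_eq_part_iff, h', part_orbitPartition_eq_part_iff]
    · rintro ⟨P, hP⟩
      refine ⟨⟨fiberRotation P.part,
        isNoncrossingPerm_fiberRotation (isNonCrossing_iff_noncrossingRel.1 hP)⟩, Subtype.ext ?_⟩
      refine finpartition_ext_part fun x y ↦ ?_
      rw [part_orbitPartition_eq_part_iff, sameCycle_fiberRotation]

end Partition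

section Counting

variable {α : Type*} [LinearOrder α]

theorem sum_card_filter_lt (s : Finset α) (g : ℕ → ℕ) :
    ∑ j ∈ s, g #{x ∈ s | x < j} = ∑ i ∈ range #s, g i := by
  induction s using Finset.induction_on_max with
  | empty => simp
  | insert a s ha ih =>
    have hnot : a ∉ s := fun h ↦ lt_irrefl a (ha a h)
    rw [sum_insert hnot, card_insert_of_notMem hnot, sum_range_succ, ← ih, add_comm]
    congr 1
    · refine sum_congr rfl fun j hj ↦ ?_
      rw [filter_insert, if_neg (ha j hj).not_gt]
    · rw [filter_insert, if_neg (lt_irrefl a), filter_true_of_mem ha]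

variable {s : Finset α} {f g : α → α} {m j : α}

theorem card_filter_lt_and_le (hm : IsLeast (s : Set α) m) (hj : j ∈ s) :
    #{x ∈ s | m < x ∧ x ≤ j} = #{x ∈ s | x < j} := by
  have hm_erase : {x ∈ s | m < x ∧ x ≤ j} = {x ∈ s | x ≤ j}.erase m := by
    ext x
    have := @hm.2 x
    grind
  have hj_erase : {x ∈ s | x < j} = {x ∈ s | x ≤ j}.erase j := by
    ext x
    grind
  have hm_mem : m ∈ {x ∈ s | x ≤ j} := mem_filter.2 ⟨hm.1, hm.2 hj⟩
  have hj_mem : j ∈ {x ∈ s | x ≤ j} := mem_filter.2 ⟨hj, le_rfl⟩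
  rw [hm_erase, hj_erase, card_erase_of_mem hm_mem, card_erase_of_mem hj_mem]

theorem card_filter_gt_add_card_filter_lt (hj : j ∈ s) :
    #{x ∈ s | j < x} + #{x ∈ s | x < j} + 1 = #s := by
  have hj_erase : s.erase j = {x ∈ s | j < x} ∪ {x ∈ s | x < j} := by
    ext x
    grind
  rw [← card_erase_add_one hj, hj_erase,
    card_union_of_disjoint (disjoint_filter.2 fun x _ h ↦ h.not_gt)]

variable [Fintype α]

/-- The maps moving each point of `s` to the largest point of its block, for the non-crossing
partitions of `s`. The last condition says that the intervals `[x, f x]` form a laminar family. -/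
def laminarMaps (s : Finset α) : Finset (α → α) :=
  {f | (∀ x ∉ s, f x = x) ∧ (∀ x ∈ s, f x ∈ s) ∧ (∀ x, x ≤ f x) ∧
    ∀ x y, x ≤ y → y ≤ f x → f y ≤ f x}

theorem mem_laminarMaps : f ∈ laminarMaps s ↔ (∀ x ∉ s, f x = x) ∧ (∀ x ∈ s, f x ∈ s) ∧
    (∀ x, x ≤ f x) ∧ ∀ x y, x ≤ y → y ≤ f x → f y ≤ f x := by
  simp [laminarMaps]

theorem laminarMaps_empty : laminarMaps (∅ : Finset α) = {id} := by
  ext f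
  rw [mem_laminarMaps, mem_singleton]
  constructor
  · exact fun h ↦ funext fun x ↦ h.1 x (notMem_empty x)
  · rintro rfl
    simp

theorem piecewise_id_mem_laminarMaps {t : Finset α} (hf : f ∈ laminarMaps s)
    (ht : ∀ x ∈ t, f x ∈ t) : t.piecewise f id ∈ laminarMaps t := by
  rw [mem_laminarMaps] at *
  simp only [piecewise]
  grind

/-- The map on `s` assembled from its value `j` at the least element `m`, its restriction `f` to
the points up to `j`, and its restriction `g` to the points beyond `j`. -/
def laminarGlue (m j : α) (f g : α → α) (x : α) : α :=
  if x = m then j else if x ≤ j then f x else g x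

theorem laminarGlue_mem_laminarMaps (hm : IsLeast (s : Set α) m) (hj : j ∈ s)
    (hf : f ∈ laminarMaps {x ∈ s | m < x ∧ x ≤ j}) (hg : g ∈ laminarMaps {x ∈ s | j < x}) :
    laminarGlue m j f g ∈ laminarMaps s := by
  have hms := hm.1
  have hmin := hm.2
  rw [mem_lowerBounds] at hmin
  simp only [mem_laminarMaps, mem_filter, laminarGlue, mem_coe] at *
  refine ⟨?_, ?_, ?_, ?_⟩
  · grind
  · grind
  · grind
  · intro x y
    have := hf.2.2.2 x y
    have := hg.2.2.2 x y
    grind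

theorem card_filter_laminarMaps (hm : IsLeast (s : Set α) m) (hj : j ∈ s) :
    #{f ∈ laminarMaps s | f m = j} =
      #(laminarMaps {x ∈ s | m < x ∧ x ≤ j}) * #(laminarMaps {x ∈ s | j < x}) := by
  have hms := hm.1
  have hmin := hm.2
  rw [mem_coe] at hms
  simp only [mem_lowerBounds, mem_coe] at hmin
  rw [← card_product]
  refine card_nbij'
    (fun f ↦ ({x ∈ s | m < x ∧ x ≤ j}.piecewise f id, {x ∈ s | j < x}.piecewise f id))
    (fun f ↦ laminarGlue m j f.1 f.2) ?_ ?_ ?_ ?_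
  · intro f hf
    rw [mem_coe, mem_filter] at hf
    obtain ⟨hf, rfl⟩ := hf
    rw [mem_coe, mem_product]
    refine ⟨piecewise_id_mem_laminarMaps hf ?_, piecewise_id_mem_laminarMaps hf ?_⟩
    all_goals
      rw [mem_laminarMaps] at hf
      grind
  · rintro ⟨f, g⟩ hfg
    rw [mem_coe, mem_product] at hfg
    rw [mem_coe, mem_filter]
    exact ⟨laminarGlue_mem_laminarMaps hm hj hfg.1 hfg.2, if_pos rfl⟩
  · intro f hf
    ext x
    rw [mem_coe, mem_filter, mem_laminarMaps] at hf
    simp only [laminarGlue, piecewise, mem_filter]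
    grind
  · rintro ⟨f, g⟩ hfg
    rw [mem_coe, mem_product, mem_laminarMaps, mem_laminarMaps] at hfg
    ext x
    all_goals
      simp only [laminarGlue, piecewise, mem_filter, id_eq] at hfg ⊢
      grind

theorem card_laminarMaps (s : Finset α) : #(laminarMaps s) = catalan #s := by
  induction hk : #s using Nat.strong_induction_on generalizing s with | _ k ih
  rcases s.eq_empty_or_nonempty with rfl | hs
  · simp [← hk, laminarMaps_empty]
  obtain ⟨m, hm⟩ : ∃ m, IsLeast (s : Set α) m := ⟨_, s.isLeast_min' hs⟩
  obtain ⟨n, hn⟩ : ∃ n, k = n + 1 := Nat.exists_eq_succ_of_ne_zero (hk ▸ hs.card_ne_zero)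
  have hcard (j) (hj : j ∈ s) : #{f ∈ laminarMaps s | f m = j} =
      catalan #{x ∈ s | x < j} * catalan (n - #{x ∈ s | x < j}) := by
    have hle := card_filter_lt_and_le hm hj
    have hlt := card_filter_gt_add_card_filter_lt hj
    have hsub : #{x ∈ s | j < x} = n - #{x ∈ s | x < j} := by omega
    rw [card_filter_laminarMaps hm hj, ih _ (by omega) _ rfl, ih _ (by omega) _ rfl, hle, hsub]
  rw [card_eq_sum_card_fiberwise fun f hf ↦ (mem_laminarMaps.1 hf).2.1 m hm.1,
    sum_congr rfl hcard, sum_card_filter_lt s fun i ↦ catalan i * catalan (n - i), hk, hn,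
    catalan_succ, Finset.sum_range]

theorem noncrossingRel_of_mem_laminarMaps (hf : f ∈ laminarMaps s) :
    NoncrossingRel fun x y ↦ f x = f y := by
  obtain ⟨-, -, hle, hlam⟩ := mem_laminarMaps.1 hf
  intro a b c d hab hbc hcd hac hbd
  have hba : f b ≤ f a := hlam a b hab.le (hbc.le.trans (hac ▸ hle c))
  have hcb : f c ≤ f b := hlam b c hbc.le (hcd.le.trans (hbd ▸ hle d))
  exact (hac.trans_le hcb).antisymm hba

theorem laminarMaps_ext (hf : f ∈ laminarMaps s) (hg : g ∈ laminarMaps s)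
    (h : ∀ x y, f x = f y ↔ g x = g y) : f = g := by
  obtain ⟨-, -, hlef, hlamf⟩ := mem_laminarMaps.1 hf
  obtain ⟨-, -, hleg, hlamg⟩ := mem_laminarMaps.1 hg
  ext x
  have hgf : g (f x) = g x := (h _ _).1 ((hlamf x _ (hlef x) le_rfl).antisymm (hlef _))
  have hfg : f (g x) = f x := (h _ _).2 ((hlamg x _ (hleg x) le_rfl).antisymm (hleg _))
  exact (hgf ▸ hleg (f x)).antisymm (hfg ▸ hlef (g x))

/-- The largest point of the block of `x`. -/
def blockMax (P : Finpartition (univ : Finset α)) (x : α) : α :=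
  (P.part x).max' ⟨x, P.mem_part (mem_univ x)⟩

variable {P : Finpartition (univ : Finset α)}

theorem part_blockMax (x : α) : P.part (blockMax P x) = P.part x :=
  P.part_eq_of_mem (P.part_mem.2 (mem_univ x)) (max'_mem _ _)

theorem le_blockMax (x : α) : x ≤ blockMax P x :=
  le_max' _ _ (P.mem_part (mem_univ x))

theorem blockMax_eq_blockMax_iff {x y : α} : blockMax P x = blockMax P y ↔ P.part x = P.part y := by
  constructor
  · intro h
    rw [← part_blockMax x, h, part_blockMax]
  · intro h
    simp only [blockMax, h]

theorem blockMax_mem_laminarMaps (hP : NoncrossingRel fun x y ↦ P.part x = P.part y) :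
    blockMax P ∈ laminarMaps univ := by
  refine mem_laminarMaps.2 ⟨by simp, by simp, le_blockMax, fun x y hxy hyx ↦ ?_⟩
  by_contra! hlt
  have hxne : x ≠ y := by
    rintro rfl
    exact hlt.false
  have hyne : y ≠ blockMax P x := by
    rintro rfl
    exact hlt.ne' (blockMax_eq_blockMax_iff.2 (part_blockMax x))
  have hpart := hP (hxy.lt_of_ne hxne) (hyx.lt_of_ne hyne) hlt (part_blockMax x).symm
    (part_blockMax y).symm
  exact hlt.ne (blockMax_eq_blockMax_iff.2 hpart)

theorem card_isNonCrossing (n : ℕ) :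
    Nat.card {P : Finpartition (univ : Finset (Fin n)) // IsNonCrossing P} = catalan n := by
  have hcongr : Nat.card {P : Finpartition (univ : Finset (Fin n)) // IsNonCrossing P} =
      Nat.card (laminarMaps (univ : Finset (Fin n))) := by
    refine Nat.card_eq_of_bijective (fun P ↦ ⟨blockMax P.1,
      blockMax_mem_laminarMaps (isNonCrossing_iff_noncrossingRel.1 P.2)⟩) ⟨fun P Q h ↦ ?_, ?_⟩
    · refine Subtype.ext (finpartition_ext_part fun x y ↦ ?_)
      have h' : blockMax P.1 = blockMax Q.1 := congrArg Subtype.val h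
      rw [← blockMax_eq_blockMax_iff, h', blockMax_eq_blockMax_iff]
    · rintro ⟨f, hf⟩
      have hP : NoncrossingRel fun x y ↦ (fiberPartition f).part x = (fiberPartition f).part y := by
        simpa only [part_fiberPartition_eq_part_iff] using noncrossingRel_of_mem_laminarMaps hf
      refine ⟨⟨fiberPartition f, isNonCrossing_iff_noncrossingRel.2 hP⟩,
        Subtype.ext (laminarMaps_ext (blockMax_mem_laminarMaps hP) hf fun x y ↦ ?_)⟩
      rw [blockMax_eq_blockMax_iff, part_fiberPartition_eq_part_iff]
  rw [hcongr, Nat.card_eq_fintype_card, Fintype.card_coe, card_laminarMaps, card_univ,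
    Fintype.card_fin]

end Counting

/-- **Geodesic permutations are in bijection with non-crossing partitions.** The permutations
`σ ∈ S_p` with `|σ| + |σ⁻¹γ| = p − 1` (where `γ = (1 2 … p)`) are in bijection with `NC(p)`
via `σ ↦ [σ]` (orbits of `σ`); in particular their number is the Catalan number
`(1/(p+1)) * choose (2p) p`. -/
theorem geodesics_equiv_noncrossing (p : ℕ) (hp : 0 < p) :
    (∃ e : {σ : Equiv.Perm (Fin p) //
          permLength σ + permLength (σ⁻¹ * finRotate p) = p - 1} ≃
        {P : Finpartition (Finset.univ : Finset (Fin p)) // IsNonCrossing P},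
      ∀ σ, ((e σ : {P : Finpartition (Finset.univ : Finset (Fin p)) // IsNonCrossing P}) :
          Finpartition (Finset.univ : Finset (Fin p))) = orbitPartition σ.val) ∧
    (p + 1) * Nat.card {σ : Equiv.Perm (Fin p) //
        permLength σ + permLength (σ⁻¹ * finRotate p) = p - 1} = Nat.choose (2 * p) p := by
  let e := (subtypeEquivRight fun _ ↦ geodesic_iff_isNoncrossingPerm).trans
    (noncrossingPermEquiv (n := p))
  refine ⟨⟨e, fun _ ↦ rfl⟩, ?_⟩
  rw [Nat.card_congr e, card_isNonCrossing, succ_mul_catalan_eq_centralBinom,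
    Nat.centralBinom_eq_two_mul_choose]
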